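/- Connection formula for the Gauss hypergeometric function at γ = α + β: for 0 < w < 1 and α, β with positive real part (and α, β not nonpositive integers), ₂F₁(α, β; α+β; w) = Γ(α+β)/(Γ(α)Γ(β)) · [ −log(1−w)·₂F₁(α, β; 1; 1−w) − Σ_{m=0}^∞ (α)_m(β)_m/(m!)² · (ψ(α+m) + ψ(β+m) − 2ψ(1+m))·(1−w)^m ]. -/

import Mathlib

open Complex

/-- Gauss hypergeometric function `₂F₁(α, β; γ; w)` as a power series. -/
noncomputable def hyp2F1 (α β γ w : ℂ) : ℂ :=
  ∑' m : ℕ, (ascPochhammer ℂ m).eval α * (ascPochhammer ℂ m).eval β /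
    ((ascPochhammer ℂ m).eval γ * Nat.factorial m) * w ^ m

/-- Complex digamma function `ψ = Γ'/Γ`. -/
noncomputable def digammaC (z : ℂ) : ℂ := deriv Complex.Gamma z / Complex.Gamma z

open Filter Topology

/-- Polynomial growth of a coefficient sequence. -/
def PG (e : ℕ → ℂ) : Prop := ∃ C : ℝ, ∃ k : ℕ, 0 ≤ C ∧ ∀ m, ‖e m‖ ≤ C * ((m : ℝ) + 1) ^ k

/-- Sum of the power series. -/
noncomputable def PS (e : ℕ → ℂ) (z : ℂ) : ℂ := ∑' m, e m * z ^ m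

/-- Coefficients of the derivative. -/
def DD (e : ℕ → ℂ) : ℕ → ℂ := fun m => ((m : ℂ) + 1) * e (m + 1)

lemma PG.mul {e f : ℕ → ℂ} (he : PG e) (hf : PG f) : PG (fun m => e m * f m) := by
  obtain ⟨C, k, hC, h⟩ := he
  obtain ⟨C', k', hC', h'⟩ := hf
  refine ⟨C * C', k + k', by positivity, fun m => ?_⟩
  rw [norm_mul]
  calc _ ≤ (C * ((m : ℝ) + 1) ^ k) * (C' * ((m : ℝ) + 1) ^ k') := by
        gcongr
        · exact h m
        · exact h' m
    _ = _ := by ring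

lemma PG.add {e f : ℕ → ℂ} (he : PG e) (hf : PG f) : PG (fun m => e m + f m) := by
  obtain ⟨C, k, hC, h⟩ := he
  obtain ⟨C', k', hC', h'⟩ := hf
  refine ⟨C + C', k + k', by positivity, fun m => ?_⟩
  have h1 : (1 : ℝ) ≤ (m : ℝ) + 1 := by linarith [(Nat.cast_nonneg m : (0:ℝ) ≤ m)]
  calc _ ≤ ‖e m‖ + ‖f m‖ := norm_add_le _ _
    _ ≤ (C * ((m : ℝ) + 1) ^ k) + (C' * ((m : ℝ) + 1) ^ k') := add_le_add (h m) (h' m)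
    _ ≤ (C * ((m : ℝ) + 1) ^ (k + k')) + (C' * ((m : ℝ) + 1) ^ (k + k')) := by
        gcongr <;> first | exact h1 | omega
    _ = _ := by ring

lemma PG.const (c : ℂ) : PG (fun _ => c) := ⟨‖c‖, 0, by positivity, fun m => by simp⟩

lemma PG.nat : PG (fun m => (m : ℂ)) := ⟨1, 1, by positivity, fun m => by simp⟩

lemma PG.congr {e f : ℕ → ℂ} (he : PG e) (h : ∀ m, e m = f m) : PG f := by
  have : e = f := funext h
  rwa [← this]

lemma PG.cmul {e : ℕ → ℂ} (c : ℂ) (he : PG e) : PG (fun m => c * e m) := (PG.const c).mul he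

lemma PG.sub {e f : ℕ → ℂ} (he : PG e) (hf : PG f) : PG (fun m => e m - f m) :=
  (he.add (hf.cmul (-1))).congr fun m => by ring

lemma PG.shift {e : ℕ → ℂ} (he : PG e) : PG (fun m => e (m + 1)) := by
  obtain ⟨C, k, hC, h⟩ := he
  refine ⟨C * 2 ^ k, k, by positivity, fun m => (h (m + 1)).trans ?_⟩
  rw [mul_assoc, ← mul_pow]
  have : (0:ℝ) ≤ m := Nat.cast_nonneg m
  gcongr
  push_cast
  linarith

lemma PG.dd {e : ℕ → ℂ} (he : PG e) : PG (DD e) := (PG.nat.add (PG.const 1)).mul he.shift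

lemma PG.of_ratio {e : ℕ → ℂ} (N : ℕ)
    (h : ∀ m, ‖e (m + 1)‖ ≤ (1 + N / ((m : ℝ) + 1)) * ‖e m‖) : PG e := by
  refine ⟨‖e 0‖, N, norm_nonneg _, fun m => ?_⟩
  induction m with
  | zero => simp
  | succ m ih =>
    have hm : (0:ℝ) ≤ m := Nat.cast_nonneg m
    have hB : 1 + N / ((m : ℝ) + 1) ≤ (1 + 1 / ((m : ℝ) + 1)) ^ N := by
      have := one_add_mul_le_pow (a := 1 / ((m : ℝ) + 1))
        (le_trans (by norm_num) (by positivity : (0:ℝ) ≤ 1 / ((m : ℝ) + 1))) N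
      calc _ = 1 + N * (1 / ((m : ℝ) + 1)) := by ring
        _ ≤ _ := this
    calc _ ≤ (1 + N / ((m : ℝ) + 1)) * ‖e m‖ := h m
      _ ≤ (1 + 1 / ((m : ℝ) + 1)) ^ N * (‖e 0‖ * ((m : ℝ) + 1) ^ N) := by gcongr
      _ = ‖e 0‖ * ((1 + 1 / ((m : ℝ) + 1)) * ((m : ℝ) + 1)) ^ N := by rw [mul_pow]; ring
      _ = _ := by
        congr 2
        push_cast
        field_simp

lemma aux_pow_le (m k : ℕ) : ((m : ℝ) + 1) ^ k ≤ (2:ℝ) ^ k * (m : ℝ) ^ k + (2:ℝ) ^ k := by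
  have h0 : (0:ℝ) ≤ m := Nat.cast_nonneg m
  rcases Nat.eq_zero_or_pos m with hm | hm
  · have h3 : (1:ℝ) ≤ 2 ^ k := one_le_pow₀ (by norm_num)
    have h4 : (0:ℝ) ≤ (2:ℝ) ^ k * (m:ℝ) ^ k := by positivity
    have h5 : ((m:ℝ) + 1) ^ k = 1 := by simp [hm]
    linarith
  · have h1 : (1:ℝ) ≤ m := by exact_mod_cast hm
    have h2 : ((m : ℝ) + 1) ^ k ≤ (2 * (m : ℝ)) ^ k :=
      pow_le_pow_left₀ (by linarith) (by linarith) k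
    rw [mul_pow] at h2
    have h3 : (0:ℝ) ≤ (2:ℝ) ^ k := by positivity
    linarith

lemma PG.summable_norm {e : ℕ → ℂ} (he : PG e) {r : ℝ} (h0 : 0 ≤ r) (h1 : r < 1) :
    Summable (fun m => ‖e m‖ * r ^ m) := by
  obtain ⟨C, k, hC, h⟩ := he
  have hr : ‖r‖ < 1 := by rwa [Real.norm_of_nonneg h0]
  have hs1 : Summable (fun m : ℕ => C * (2:ℝ) ^ k * ((m : ℝ) ^ k * r ^ m)) :=
    (summable_pow_mul_geometric_of_norm_lt_one k hr).mul_left _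
  have hs2 : Summable (fun m : ℕ => C * (2:ℝ) ^ k * r ^ m) :=
    (summable_geometric_of_lt_one h0 h1).mul_left _
  refine Summable.of_nonneg_of_le (fun m => by positivity) (fun m => ?_) (hs1.add hs2)
  have hrm : 0 ≤ r ^ m := by positivity
  calc ‖e m‖ * r ^ m ≤ C * ((m : ℝ) + 1) ^ k * r ^ m := mul_le_mul_of_nonneg_right (h m) hrm
    _ ≤ C * ((2:ℝ) ^ k * (m : ℝ) ^ k + (2:ℝ) ^ k) * r ^ m :=
      mul_le_mul_of_nonneg_right (mul_le_mul_of_nonneg_left (aux_pow_le m k) hC) hrm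
    _ = _ := by ring

lemma PG.summable {e : ℕ → ℂ} (he : PG e) {z : ℂ} (hz : ‖z‖ < 1) :
    Summable (fun m => e m * z ^ m) :=
  Summable.of_norm ((he.summable_norm (norm_nonneg z) hz).congr fun m => by simp)

lemma PS_mul_dd {e : ℕ → ℂ} (he : PG e) {z : ℂ} (hz : ‖z‖ < 1) :
    z * PS (DD e) z = PS (fun m => m * e m) z := by
  unfold PS
  rw [((PG.nat.mul he).summable hz).tsum_eq_zero_add, ← tsum_mul_left]
  simp only [Nat.cast_zero, zero_mul, zero_add, DD]
  refine tsum_congr fun m => ?_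
  push_cast
  ring

lemma PS_hasDerivAt {e : ℕ → ℂ} (he : PG e) {z : ℂ} (hz : ‖z‖ < 1) :
    HasDerivAt (PS e) (PS (DD e) z) z := by
  obtain ⟨r, hr1, hr2⟩ := exists_between hz
  have hr0 : 0 ≤ r := (norm_nonneg z).trans hr1.le
  have hu : Summable (fun m : ℕ => ‖e m‖ * (m * r ^ (m - 1))) := by
    rw [← summable_nat_add_iff 1]
    refine (he.dd.summable_norm hr0 hr2).congr fun m => ?_
    have : ‖(m : ℂ) + 1‖ = (m : ℝ) + 1 := by
      rw [← Nat.cast_succ, Complex.norm_natCast]; push_cast; ring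
    simp only [DD, norm_mul, this]
    rw [Nat.add_sub_cancel]
    push_cast
    ring
  have key := hasDerivAt_tsum_of_isPreconnected (g := fun m z => e m * z ^ m)
    (g' := fun m z => e m * (m * z ^ (m - 1))) (t := Metric.ball 0 r) (y₀ := 0) (y := z) hu
    Metric.isOpen_ball (convex_ball _ _).isPreconnected
    (fun n y _ => (hasDerivAt_pow n y).const_mul (e n))
    (fun n y hy => by
      have : ‖y‖ ≤ r := by simpa using (Metric.mem_ball.1 hy).le
      simp only [norm_mul, norm_pow, Complex.norm_natCast]
      gcongr)
    (by simpa using lt_of_le_of_lt (norm_nonneg z) hr1) (he.summable (by simp)) (by simpa using hr1)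
  have h2 : (∑' n, e n * (n * z ^ (n - 1))) = PS (DD e) z := by
    have hs : Summable (fun n => e n * (n * z ^ (n - 1))) := by
      refine Summable.of_norm_bounded hu fun m => ?_
      simp only [norm_mul, norm_pow, Complex.norm_natCast]
      gcongr
    rw [hs.tsum_eq_zero_add]
    simp only [Nat.cast_zero, zero_mul, mul_zero, zero_add, PS, DD]
    refine tsum_congr fun m => ?_
    rw [Nat.add_sub_cancel]
    push_cast
    ring
  rw [← h2]
  exact key

lemma PS_zero (e : ℕ → ℂ) : PS e 0 = e 0 := by
  unfold PS
  rw [tsum_eq_single 0 (fun m hm => by simp [hm])]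
  simp

lemma PS_add {e f : ℕ → ℂ} (he : PG e) (hf : PG f) {z : ℂ} (hz : ‖z‖ < 1) :
    PS (fun m => e m + f m) z = PS e z + PS f z := by
  unfold PS
  rw [← (he.summable hz).tsum_add (hf.summable hz)]
  exact tsum_congr fun m => by ring

lemma PS_cmul (c : ℂ) (e : ℕ → ℂ) (z : ℂ) :
    PS (fun m => c * e m) z = c * PS e z := by
  unfold PS
  rw [← tsum_mul_left]
  exact tsum_congr fun m => by ring

lemma PS_sub {e f : ℕ → ℂ} (he : PG e) (hf : PG f) {z : ℂ} (hz : ‖z‖ < 1) :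
    PS (fun m => e m - f m) z = PS e z - PS f z := by
  unfold PS
  rw [← (he.summable hz).tsum_sub (hf.summable hz)]
  exact tsum_congr fun m => by ring

/-- The hypergeometric operator on a power series. -/
lemma PS_ode {e : ℕ → ℂ} (he : PG e) (a b c : ℂ) {z : ℂ} (hz : ‖z‖ < 1) :
    z * (1 - z) * PS (DD (DD e)) z + (c - (a + b + 1) * z) * PS (DD e) z - a * b * PS e z
      = PS (fun m => ((m : ℂ) + 1) * (m + c) * e (m + 1) - (m + a) * (m + b) * e m) z := by
  have h1 := PS_mul_dd he hz
  have h2 := PS_mul_dd he.dd hz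
  have h3 : z * PS (fun m => m * DD e m) z = PS (fun m => m * (m * e m)) z - PS (fun m => m * e m) z := by
    have h4 := PS_mul_dd (PG.nat.mul he) hz
    have h5 : PS (fun m => m * DD e m) z = PS (DD (fun m => m * e m)) z - PS (DD e) z := by
      rw [← PS_sub (PG.nat.mul he).dd he.dd hz]
      congr 1
      funext m
      simp only [DD]
      push_cast
      ring
    rw [h5, mul_sub, h4, h1]
  have e1 : z * (1 - z) * PS (DD (DD e)) z + (c - (a + b + 1) * z) * PS (DD e) z - a * b * PS e z
      = (PS (fun m => m * DD e m) z + c * PS (DD e) z) - (PS (fun m => m * (m * e m)) z +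
        (a + b) * PS (fun m => m * e m) z + a * b * PS e z) := by
    linear_combination (1 - z) * h2 - h3 - (a + b + 1) * h1
  rw [e1, ← PS_cmul, ← PS_cmul, ← PS_cmul, ← PS_add (PG.nat.mul he.dd) (he.dd.cmul _) hz,
    ← PS_add (PG.nat.mul (PG.nat.mul he)) ((PG.nat.mul he).cmul _) hz,
    ← PS_add ((PG.nat.mul (PG.nat.mul he)).add ((PG.nat.mul he).cmul _)) (he.cmul _) hz,
    ← PS_sub ((PG.nat.mul he.dd).add (he.dd.cmul _))
      (((PG.nat.mul (PG.nat.mul he)).add ((PG.nat.mul he).cmul _)).add (he.cmul _)) hz]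
  congr 1
  funext m
  simp only [DD]
  ring

/-- Rising factorial. -/
noncomputable def po (a : ℂ) (m : ℕ) : ℂ := (ascPochhammer ℂ m).eval a

lemma po_zero (a : ℂ) : po a 0 = 1 := by simp [po]

lemma po_succ (a : ℂ) (m : ℕ) : po a (m + 1) = po a m * (a + m) := by
  simp [po, ascPochhammer_succ_eval]

lemma po_one (m : ℕ) : po 1 m = (m.factorial : ℂ) := by
  simp [po]

lemma re_add_nat {c : ℂ} (hc : 0 < c.re) (m : ℕ) : 0 < (c + m).re := by
  simp only [Complex.add_re, Complex.natCast_re]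
  positivity

lemma ne_zero_of_re {c : ℂ} (hc : 0 < c.re) : c ≠ 0 := by
  rintro rfl
  simp at hc

lemma po_ne_zero {c : ℂ} (hc : 0 < c.re) (m : ℕ) : po c m ≠ 0 := by
  induction m with
  | zero => simp [po_zero]
  | succ m ih =>
    rw [po_succ]
    exact mul_ne_zero ih (ne_zero_of_re (re_add_nat hc m))

lemma Gamma_add_nat {c : ℂ} (hc : 0 < c.re) (m : ℕ) :
    Complex.Gamma (c + m) = po c m * Complex.Gamma c := by
  induction m with
  | zero => simp [po_zero]
  | succ m ih =>
    rw [po_succ, Nat.cast_succ, ← add_assoc,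
      Complex.Gamma_add_one _ (ne_zero_of_re (re_add_nat hc m)), ih]
    ring

lemma PG_quot (a : ℂ) {c : ℂ} (hc : 0 < c.re) : PG (fun m => po a m / po c m) := by
  set δ := min 1 c.re with hδ
  have hδ0 : 0 < δ := lt_min one_pos hc
  refine PG.of_ratio ⌈‖a - c‖ / δ⌉₊ fun m => ?_
  have hm : (0:ℝ) ≤ m := Nat.cast_nonneg m
  have hcm : c + m ≠ 0 := ne_zero_of_re (re_add_nat hc m)
  have hlow : δ * ((m : ℝ) + 1) ≤ ‖c + m‖ := by
    calc δ * ((m : ℝ) + 1) = δ * m + δ := by ring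
      _ ≤ 1 * m + c.re := by
        gcongr
        · exact min_le_left _ _
        · exact min_le_right _ _
      _ = (c + m).re := by simp; ring
      _ ≤ _ := Complex.re_le_norm _
  have h1 : po a (m + 1) / po c (m + 1) = (1 + (a - c) / (c + m)) * (po a m / po c m) := by
    have := po_ne_zero hc m
    rw [po_succ, po_succ]
    field_simp
    ring
  rw [h1, norm_mul]
  gcongr
  calc _ ≤ ‖(1:ℂ)‖ + ‖(a - c) / (c + m)‖ := norm_add_le _ _
    _ ≤ 1 + ⌈‖a - c‖ / δ⌉₊ / ((m : ℝ) + 1) := by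
      rw [norm_one, norm_div]
      refine add_le_add le_rfl ?_
      calc ‖a - c‖ / ‖c + m‖ ≤ ‖a - c‖ / (δ * ((m : ℝ) + 1)) := by gcongr
        _ = ‖a - c‖ / δ / ((m : ℝ) + 1) := by rw [div_div]
        _ ≤ _ := by
          exact div_le_div_of_nonneg_right (Nat.le_ceil _) (by positivity)

lemma PG_bin (a : ℂ) : PG (fun m => po a m / (m.factorial : ℂ)) :=
  (PG_quot a (c := 1) (by simp)).congr fun m => by rw [po_one]

lemma digammaC_succ {c : ℂ} (hc : 0 < c.re) (m : ℕ) :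
    digammaC (c + (m + 1 : ℕ)) = digammaC (c + m) + 1 / (c + m) := by
  have h := Complex.digamma_apply_add_one (c + m) (fun k hk => by
    have h1 := re_add_nat hc m
    rw [hk] at h1
    simp at h1
    have : (0:ℝ) ≤ k := Nat.cast_nonneg k
    linarith)
  have e : ∀ z, Complex.digamma z = digammaC z := fun z => by
    rw [Complex.digamma_def, logDeriv_apply]; rfl
  rw [e, e] at h
  rw [Nat.cast_succ, ← add_assoc, h, one_div]

lemma PG_digamma {c : ℂ} (hc : 0 < c.re) : PG (fun m => digammaC (c + m)) := by
  refine ⟨‖digammaC c‖ + 1 / c.re, 1, by positivity, fun m => ?_⟩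
  have h : ‖digammaC (c + m)‖ ≤ ‖digammaC c‖ + m * (1 / c.re) := by
    induction m with
    | zero => simp
    | succ m ih =>
      rw [digammaC_succ hc]
      have h1 : ‖1 / (c + m)‖ ≤ 1 / c.re := by
        rw [norm_div, norm_one]
        gcongr
        calc c.re ≤ (c + m).re := by simp
          _ ≤ _ := Complex.re_le_norm _
      calc _ ≤ ‖digammaC (c + m)‖ + ‖1 / (c + m)‖ := norm_add_le _ _
        _ ≤ (‖digammaC c‖ + m * (1 / c.re)) + 1 / c.re := add_le_add ih h1
        _ = _ := by push_cast; ring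
  have h2 : 0 ≤ ‖digammaC c‖ * m := by positivity
  have h3 : 0 < 1 / c.re := by positivity
  rw [pow_one]
  nlinarith

lemma binom (a : ℂ) {x : ℂ} (hx : ‖x‖ < 1) :
    PS (fun m => po a m / (m.factorial : ℂ)) x = (1 - x) ^ (-a) := by
  set e : ℕ → ℂ := fun m => po a m / (m.factorial : ℂ) with he
  have hPG : PG e := PG_bin a
  have slit : ∀ y : ℂ, ‖y‖ < 1 → 1 - y ∈ Complex.slitPlane := fun y hy => by
    rw [sub_eq_add_neg]
    exact Complex.mem_slitPlane_of_norm_lt_one (by rwa [norm_neg])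
  have ode : ∀ y : ℂ, ‖y‖ < 1 → (1 - y) * PS (DD e) y = a * PS e y := fun y hy => by
    rw [sub_mul, one_mul, PS_mul_dd hPG hy, ← PS_sub hPG.dd (PG.nat.mul hPG) hy, ← PS_cmul]
    congr 1
    funext m
    have h1 : ((m.factorial : ℕ) : ℂ) ≠ 0 := by exact_mod_cast m.factorial_ne_zero
    have h2 : (m : ℂ) + 1 ≠ 0 := by exact_mod_cast m.succ_ne_zero
    simp only [DD, he, po_succ, Nat.factorial_succ]
    push_cast
    field_simp
    ring
  have hd : ∀ y ∈ Metric.ball (0:ℂ) 1, HasDerivAt (fun y => PS e y * (1 - y) ^ a) 0 y := by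
    intro y hy
    have hy' : ‖y‖ < 1 := by simpa using hy
    have hne : 1 - y ≠ 0 := Complex.slitPlane_ne_zero (slit y hy')
    have h1 := (PS_hasDerivAt hPG hy').mul
      (((hasDerivAt_id y).const_sub 1).cpow_const (c := a) (slit y hy'))
    refine h1.congr_deriv ?_
    have h2 : (1 - y) ^ a = (1 - y) ^ (a - 1) * (1 - y) := by
      rw [Complex.cpow_sub _ _ hne, Complex.cpow_one]
      field_simp
    simp only [id]
    rw [h2]
    linear_combination (1 - y) ^ (a - 1) * ode y hy'
  have hc := Metric.isOpen_ball.is_const_of_deriv_eq_zero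
    (convex_ball (0:ℂ) 1).isPreconnected
    (fun y hy => (hd y hy).differentiableAt.differentiableWithinAt)
    (fun y hy => (hd y hy).deriv) (x := x) (y := 0) (by simpa using hx) (by simp)
  have h0 : (1 - x) ^ a ≠ 0 := by
    exact fun h => Complex.slitPlane_ne_zero (slit x hx) ((Complex.cpow_eq_zero_iff _ _).1 h).1
  simp only [PS_zero, sub_zero, Complex.one_cpow, mul_one] at hc
  rw [Complex.cpow_neg]
  refine eq_inv_of_mul_eq_one_left ?_
  rw [hc]
  simp [he, po_zero]

open MeasureTheory in
lemma euler_int {a b : ℂ} (ha : 0 < a.re) (hb : 0 < b.re) {w : ℝ} (hw0 : 0 ≤ w) (hw1 : w < 1) :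
    PS (fun m => po a m / (m.factorial : ℂ) * Complex.betaIntegral (b + m) a) w =
      ∫ t : ℝ in (0:ℝ)..1, (t : ℂ) ^ (b - 1) * (1 - (t : ℂ)) ^ (a - 1) * (1 - (w : ℂ) * t) ^ (-a) := by
  set k : ℝ → ℂ := fun t => (t : ℂ) ^ (b - 1) * (1 - (t : ℂ)) ^ (a - 1) with hk
  have hkint : IntervalIntegrable k volume 0 1 := Complex.betaIntegral_convergent hb ha
  set e : ℕ → ℂ := fun m => po a m / (m.factorial : ℂ) with he
  have hs := (PG_bin a).summable_norm hw0 hw1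
  have key := intervalIntegral.hasSum_integral_of_dominated_convergence (μ := volume) (a := 0)
    (b := 1) (F := fun (n : ℕ) (t : ℝ) => k t * (e n * ((w : ℂ) * t) ^ n))
    (f := fun t : ℝ => k t * (1 - (w : ℂ) * t) ^ (-a))
    (fun n t => ‖k t‖ * (‖e n‖ * w ^ n))
    (fun n => by
      refine AEStronglyMeasurable.mul ?_ (Continuous.aestronglyMeasurable (by fun_prop))
      have := hkint.aestronglyMeasurable
      rwa [Set.uIoc_of_le zero_le_one])
    (fun n => by
      refine Filter.Eventually.of_forall fun t ht => ?_
      rw [Set.uIoc_of_le zero_le_one] at ht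
      simp only [norm_mul, norm_pow, Complex.norm_real, Real.norm_of_nonneg hw0,
        Real.norm_of_nonneg ht.1.le]
      have : w * t ≤ w := mul_le_of_le_one_right hw0 ht.2
      have h0 : 0 ≤ w * t := mul_nonneg hw0 ht.1.le
      gcongr)
    (Filter.Eventually.of_forall fun t _ => hs.mul_left _)
    (by
      simp_rw [tsum_mul_left]
      exact hkint.norm.mul_const _)
    (Filter.Eventually.of_forall fun t ht => by
      rw [Set.uIoc_of_le zero_le_one] at ht
      have hn : ‖(w : ℂ) * t‖ < 1 := by
        rw [norm_mul, Complex.norm_real, Complex.norm_real, Real.norm_of_nonneg hw0,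
          Real.norm_of_nonneg ht.1.le]
        nlinarith [ht.1, ht.2]
      refine HasSum.mul_left _ ?_
      rw [← binom a hn]
      exact ((PG_bin a).summable hn).hasSum)
  rw [← key.tsum_eq]
  unfold PS
  refine tsum_congr fun n => ?_
  have : ∫ t : ℝ in (0:ℝ)..1, k t * (e n * ((w : ℂ) * t) ^ n) =
      ∫ t : ℝ in (0:ℝ)..1, (e n * (w : ℂ) ^ n) * ((t : ℂ) ^ (b + n - 1) * (1 - (t : ℂ)) ^ (a - 1)) := by
    refine intervalIntegral.integral_congr_ae (Filter.Eventually.of_forall fun t ht => ?_)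
    rw [Set.uIoc_of_le zero_le_one] at ht
    have h0 : (t : ℂ) ≠ 0 := by exact_mod_cast ht.1.ne'
    have : (t : ℂ) ^ (b + n - 1) = (t : ℂ) ^ (b - 1) * (t : ℂ) ^ n := by
      rw [← Complex.cpow_natCast, ← Complex.cpow_add _ _ h0]
      congr 1
      ring
    simp only [hk]
    rw [this, mul_pow]
    ring
  rw [this, intervalIntegral.integral_const_mul]
  unfold Complex.betaIntegral
  ring

open MeasureTheory in
lemma psi_integrable {b : ℂ} (hb : 0 < b.re) :
    IntervalIntegrable (fun t : ℝ => ((t : ℂ) ^ (b - 1) - 1) / (1 - (t : ℂ))) volume 0 1 := by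
  have h1 : IntervalIntegrable (fun t : ℝ => ((t : ℂ) ^ (b - 1) - 1) / (1 - (t : ℂ))) volume 0 (1/2) := by
    simp_rw [div_eq_mul_inv]
    apply IntervalIntegrable.mul_continuousOn
    · refine IntervalIntegrable.sub (intervalIntegral.intervalIntegrable_cpow' ?_)
        intervalIntegrable_const
      simp only [Complex.sub_re, Complex.one_re]
      linarith
    · apply ContinuousOn.inv₀ (by fun_prop)
      intro x hx
      rw [Set.uIcc_of_le (by norm_num)] at hx
      have : x ≠ 1 := by linarith [hx.2]
      rw [sub_ne_zero]
      exact_mod_cast this.symm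
  refine h1.trans ?_
  set φ : ℝ → ℂ := fun t => (t : ℂ) ^ (b - 1) with hφ
  have hd : ∀ t : ℝ, 0 < t → DifferentiableAt ℝ φ t := fun t ht => by
    have : HasDerivAt (fun z : ℂ => z ^ (b - 1)) ((b - 1) * (t : ℂ) ^ (b - 1 - 1) * 1) (t : ℂ) :=
      (hasDerivAt_id (t : ℂ)).cpow_const (Complex.ofReal_mem_slitPlane.2 ht)
    exact this.comp_ofReal.differentiableAt
  have hc : ContinuousOn (dslope φ 1) (Set.uIcc (1/2) 1) := by
    rw [Set.uIcc_of_le (by norm_num)]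
    intro t ht
    have ht0 : 0 < t := by linarith [ht.1]
    refine ContinuousAt.continuousWithinAt ?_
    by_cases h : t = 1
    · rw [h]; exact continuousAt_dslope_same.2 (hd 1 one_pos)
    · exact (continuousAt_dslope_of_ne h).2 (hd t ht0).continuousAt
  have hi := hc.intervalIntegrable (μ := volume)
  refine (hi.neg).congr_ae ?_
  have hne : ∀ᵐ t : ℝ, t ≠ 1 := by simp [ae_iff]
  filter_upwards [ae_restrict_of_ae hne] with t ht
  have h2 : (1 : ℂ) - t ≠ 0 := by
    rw [sub_ne_zero]; exact_mod_cast ht.symm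
  have h3 : (t : ℂ) - 1 ≠ 0 := by
    rw [sub_ne_zero]; exact_mod_cast ht
  simp only [Pi.neg_apply]
  rw [dslope_of_ne _ ht, slope_def_module]
  simp only [hφ, Complex.ofReal_one, Complex.one_cpow, Complex.real_smul]
  push_cast
  field_simp
  ring

open MeasureTheory in
lemma psi_dct {b : ℂ} (hb : 0 < b.re) {l : Filter ℝ} [l.IsCountablyGenerated] (k : ℝ → ℝ → ℂ)
    (hm : ∀ᶠ s in l, Measurable (k s)) (hb1 : ∀ᶠ s in l, ∀ t ∈ Set.Ioo (0:ℝ) 1, ‖k s t‖ ≤ 1)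
    (hl : ∀ t ∈ Set.Ioo (0:ℝ) 1, Tendsto (fun s => k s t) l (𝓝 1)) :
    Tendsto (fun s => ∫ t : ℝ in (0:ℝ)..1, ((t : ℂ) ^ (b - 1) - 1) / (1 - (t : ℂ)) * k s t) l
      (𝓝 (∫ t : ℝ in (0:ℝ)..1, ((t : ℂ) ^ (b - 1) - 1) / (1 - (t : ℂ)))) := by
  have hi := psi_integrable hb
  have hne : ∀ᵐ t : ℝ, t ≠ 1 := by simp [ae_iff]
  refine intervalIntegral.tendsto_integral_filter_of_dominated_convergence
    (fun t : ℝ => ‖((t : ℂ) ^ (b - 1) - 1) / (1 - (t : ℂ))‖) ?_ ?_ hi.norm ?_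
  · filter_upwards [hm] with s hs
    refine AEStronglyMeasurable.mul ?_ hs.aestronglyMeasurable
    have := hi.aestronglyMeasurable
    rwa [Set.uIoc_of_le zero_le_one]
  · filter_upwards [hb1] with s hs
    filter_upwards [hne] with t ht htI
    rw [Set.uIoc_of_le zero_le_one] at htI
    rw [norm_mul]
    exact mul_le_of_le_one_right (norm_nonneg _) (hs t ⟨htI.1, lt_of_le_of_ne htI.2 ht⟩)
  · filter_upwards [hne] with t ht htI
    rw [Set.uIoc_of_le zero_le_one] at htI
    simpa using (hl t ⟨htI.1, lt_of_le_of_ne htI.2 ht⟩).const_mul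
      (((t : ℂ) ^ (b - 1) - 1) / (1 - (t : ℂ)))

open MeasureTheory in
lemma psi_int {b : ℂ} (hb : 0 < b.re) :
    ∫ t : ℝ in (0:ℝ)..1, ((t : ℂ) ^ (b - 1) - 1) / (1 - (t : ℂ)) = digammaC 1 - digammaC b := by
  have hne : ∀ᵐ t : ℝ, t ≠ 1 := by simp [ae_iff]
  have h1 := psi_dct hb (l := 𝓝[>] (0:ℝ)) (fun s t => (1 - (t : ℂ)) ^ (s : ℂ))
    (Filter.Eventually.of_forall fun s => by fun_prop)
    (by
      filter_upwards [self_mem_nhdsWithin] with s (hs : 0 < s) t ht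
      have : (1 : ℂ) - t = ((1 - t : ℝ) : ℂ) := by push_cast; ring
      rw [this, Complex.norm_cpow_eq_rpow_re_of_pos (by linarith [ht.2])]
      exact Real.rpow_le_one (by linarith [ht.2]) (by linarith [ht.1]) (by simpa using hs.le))
    (fun t ht => by
      have h0 : (1 : ℂ) - t ≠ 0 := by
        rw [sub_ne_zero]; exact_mod_cast ht.2.ne'
      have hc : Continuous (fun s : ℝ => (1 - (t : ℂ)) ^ (s : ℂ)) :=
        Complex.continuous_ofReal.const_cpow (Or.inl h0)
      have := hc.tendsto 0
      simp only [Complex.ofReal_zero, Complex.cpow_zero] at this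
      exact this.mono_left nhdsWithin_le_nhds)
  set G : ℂ → ℂ := fun s => Complex.Gamma b * (Complex.Gamma (b + s))⁻¹ - (Complex.Gamma (1 + s))⁻¹
    with hG
  have hGb : Complex.Gamma b ≠ 0 := Complex.Gamma_ne_zero_of_re_pos hb
  have dG : ∀ c : ℂ, 0 < c.re → HasDerivAt (fun s => (Complex.Gamma (c + s))⁻¹)
      (-deriv Complex.Gamma c / Complex.Gamma c ^ 2) 0 := fun c hc => by
    have hd : HasDerivAt Complex.Gamma (deriv Complex.Gamma c) (c + 0) := by
      rw [add_zero]
      refine (Complex.differentiableAt_Gamma c fun m hm => ?_).hasDerivAt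
      rw [hm] at hc
      simp at hc
      have : (0:ℝ) ≤ m := Nat.cast_nonneg m
      linarith
    have h2 := (hd.comp_const_add c 0).fun_inv (by
      rw [add_zero]; exact Complex.Gamma_ne_zero_of_re_pos hc)
    simpa using h2
  have hG' : HasDerivAt G (digammaC 1 - digammaC b) 0 := by
    refine (((dG b hb).const_mul (Complex.Gamma b)).sub (dG 1 (by simp))).congr_deriv ?_
    unfold digammaC
    rw [Complex.Gamma_one]
    field_simp
    ring
  have hG0 : G 0 = 0 := by simp [hG, hGb]
  have hslope : Tendsto (fun s : ℝ => (s : ℂ)⁻¹ * G s) (𝓝[>] 0) (𝓝 (digammaC 1 - digammaC b)) := by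
    have h2 := hasDerivAt_iff_tendsto_slope.1 (HasDerivAt.comp_ofReal (z := 0) (by simpa using hG'))
    have h3 := h2.mono_left (nhdsWithin_mono (0:ℝ) (fun x (hx : 0 < x) => hx.ne'))
    refine h3.congr fun s => ?_
    rw [slope_def_module]
    simp [hG0]
  have hΓ : Tendsto (fun s : ℝ => Complex.Gamma (1 + s)) (𝓝[>] 0) (𝓝 1) := by
    have hc : ContinuousAt Complex.Gamma (1 + ((0:ℝ):ℂ)) := by
      rw [Complex.ofReal_zero, add_zero]
      refine (Complex.differentiableAt_Gamma 1 fun m hm => ?_).continuousAt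
      have := congrArg Complex.re hm
      simp at this
      have h5 : (0:ℝ) ≤ m := Nat.cast_nonneg m
      linarith
    have h2 : ContinuousAt (fun s : ℝ => Complex.Gamma (1 + s)) 0 :=
      ContinuousAt.comp (f := fun s : ℝ => 1 + (s : ℂ)) (g := Complex.Gamma) hc (by fun_prop)
    have h3 := h2.tendsto
    simp only [Complex.ofReal_zero, add_zero, Complex.Gamma_one] at h3
    exact h3.mono_left nhdsWithin_le_nhds
  have h2 := hΓ.mul hslope
  rw [one_mul] at h2
  refine tendsto_nhds_unique (h1.congr' ?_) h2
  filter_upwards [self_mem_nhdsWithin] with s (hs : 0 < s)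
  have hsr : 0 < (s : ℂ).re := by simpa using hs
  have hs0 : (s : ℂ) ≠ 0 := ne_zero_of_re hsr
  have e1 : ∫ t : ℝ in (0:ℝ)..1, ((t : ℂ) ^ (b - 1) - 1) / (1 - (t : ℂ)) * (1 - (t : ℂ)) ^ (s : ℂ) =
      Complex.betaIntegral b s - Complex.betaIntegral 1 s := by
    unfold Complex.betaIntegral
    rw [← intervalIntegral.integral_sub (Complex.betaIntegral_convergent hb hsr)
      (Complex.betaIntegral_convergent (by simp) hsr)]
    refine intervalIntegral.integral_congr_ae ?_
    filter_upwards [hne] with t ht _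
    have h2 : (1 : ℂ) - t ≠ 0 := by
      rw [sub_ne_zero]; exact_mod_cast ht.symm
    rw [Complex.cpow_sub _ _ h2, Complex.cpow_one, sub_self, Complex.cpow_zero]
    ring
  rw [e1, Complex.betaIntegral_eq_Gamma_mul_div _ _ hb hsr,
    Complex.betaIntegral_eq_Gamma_mul_div _ _ (by simp) hsr, Complex.Gamma_one, add_comm (1:ℂ),
    Complex.Gamma_add_one _ hs0]
  have hΓs : Complex.Gamma s ≠ 0 := Complex.Gamma_ne_zero_of_re_pos hsr
  simp only [hG]
  rw [add_comm (1:ℂ), Complex.Gamma_add_one _ hs0]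
  field_simp

/-- Normalised coefficients. -/
noncomputable def Jc (a b : ℂ) (m : ℕ) : ℂ :=
  po a m / (m.factorial : ℂ) * Complex.betaIntegral (b + m) a

lemma Jc_eq {a b : ℂ} (ha : 0 < a.re) (hb : 0 < b.re) (m : ℕ) :
    Jc a b m = Complex.Gamma a * Complex.Gamma b / Complex.Gamma (a + b) *
      (po a m * po b m / (po (a + b) m * (m.factorial : ℂ))) := by
  have hab : 0 < (a + b).re := by simp; linarith
  unfold Jc
  rw [Complex.betaIntegral_eq_Gamma_mul_div _ _ (re_add_nat hb m) ha,
    show b + m + a = (a + b) + m by ring, Gamma_add_nat hb, Gamma_add_nat hab]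
  have := po_ne_zero hab m
  have := Complex.Gamma_ne_zero_of_re_pos hab
  field_simp

lemma Jc_symm {a b : ℂ} (ha : 0 < a.re) (hb : 0 < b.re) : Jc a b = Jc b a := by
  funext m
  rw [Jc_eq ha hb, Jc_eq hb ha, add_comm b a]
  ring

lemma Jc_one (m : ℕ) : Jc 1 1 m = 1 / ((m : ℂ) + 1) := by
  unfold Jc
  rw [Complex.betaIntegral_eval_one_right (re_add_nat (by simp) m), po_one, div_self, one_mul,
    add_comm]
  exact_mod_cast m.factorial_ne_zero

lemma PG_cf (a b : ℂ) {c : ℂ} (hc : 0 < c.re) :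
    PG (fun m => po a m * po b m / (po c m * (m.factorial : ℂ))) :=
  ((PG_quot a hc).mul (PG_bin b)).congr fun m => by rw [div_mul_div_comm]

lemma PG_Jc {a b : ℂ} (ha : 0 < a.re) (hb : 0 < b.re) : PG (Jc a b) :=
  ((PG_cf a b (c := a + b) (by simp; linarith)).cmul _).congr fun m => (Jc_eq ha hb m).symm

open MeasureTheory in
lemma J_diff {a b : ℂ} (ha : 0 < a.re) (hb : 0 < b.re) :
    Tendsto (fun w : ℝ => PS (Jc a b) w - PS (Jc a 1) w) (𝓝[<] 1) (𝓝 (digammaC 1 - digammaC b)) := by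
  have hne : ∀ᵐ t : ℝ, t ≠ 1 := by simp [ae_iff]
  have hI : ∀ᶠ w : ℝ in 𝓝[<] 1, w ∈ Set.Ioo (0:ℝ) 1 := Ioo_mem_nhdsLT one_pos
  have h1 := psi_dct hb (l := 𝓝[<] (1:ℝ))
    (fun w t => (1 - (t : ℂ)) ^ a * (1 - (w : ℂ) * t) ^ (-a))
    (Filter.Eventually.of_forall fun s => by fun_prop)
    (by
      filter_upwards [hI] with w hw t ht
      have hwt : w * t ≤ t := mul_le_of_le_one_left ht.1.le hw.2.le
      have h1 : (1 : ℂ) - t = ((1 - t : ℝ) : ℂ) := by push_cast; ring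
      have h2 : (1 : ℂ) - w * t = ((1 - w * t : ℝ) : ℂ) := by push_cast; ring
      have h3 : 0 < 1 - t := by linarith [ht.2]
      have h4 : 0 < 1 - w * t := by linarith
      rw [h1, h2, norm_mul, Complex.norm_cpow_eq_rpow_re_of_pos h3,
        Complex.norm_cpow_eq_rpow_re_of_pos h4, Complex.neg_re, Real.rpow_neg h4.le,
        ← div_eq_mul_inv]
      refine div_le_one_of_le₀ ?_ (by positivity)
      exact Real.rpow_le_rpow h3.le (by linarith) ha.le)
    (fun t ht => by
      have h1 : (1 : ℂ) - t = ((1 - t : ℝ) : ℂ) := by push_cast; ring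
      have hs : (1 : ℂ) - ((1:ℝ) : ℂ) * t ∈ Complex.slitPlane := by
        rw [Complex.ofReal_one, one_mul, h1]
        exact Complex.ofReal_mem_slitPlane.2 (by linarith [ht.2])
      have hc : ContinuousAt (fun w : ℝ => (1 - (t : ℂ)) ^ a * (1 - (w : ℂ) * t) ^ (-a)) 1 := by
        refine ContinuousAt.mul continuousAt_const (ContinuousAt.cpow ?_ continuousAt_const hs)
        fun_prop
      have h0 : (1 : ℂ) - t ≠ 0 := by
        rw [sub_ne_zero]; exact_mod_cast ht.2.ne'
      have h5 := hc.tendsto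
      rw [Complex.ofReal_one, one_mul, ← Complex.cpow_add _ _ h0, add_neg_cancel,
        Complex.cpow_zero] at h5
      exact h5.mono_left nhdsWithin_le_nhds)
  rw [psi_int hb] at h1
  refine h1.congr' ?_
  filter_upwards [hI] with w hw
  unfold Jc
  rw [euler_int ha hb hw.1.le hw.2, euler_int ha (by simp) hw.1.le hw.2]
  have hcont : ContinuousOn (fun t : ℝ => (1 - (w : ℂ) * t) ^ (-a)) (Set.uIcc 0 1) := by
    rw [Set.uIcc_of_le zero_le_one]
    intro t ht
    refine ContinuousAt.continuousWithinAt (ContinuousAt.cpow (by fun_prop) continuousAt_const ?_)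
    have h2 : (1 : ℂ) - w * t = ((1 - w * t : ℝ) : ℂ) := by push_cast; ring
    rw [h2]
    refine Complex.ofReal_mem_slitPlane.2 ?_
    nlinarith [ht.1, ht.2, hw.1, hw.2]
  rw [← intervalIntegral.integral_sub
    ((Complex.betaIntegral_convergent hb ha).mul_continuousOn hcont)
    ((Complex.betaIntegral_convergent (by simp) ha).mul_continuousOn hcont)]
  refine intervalIntegral.integral_congr_ae ?_
  filter_upwards [hne] with t ht _
  have h2 : (1 : ℂ) - t ≠ 0 := by
    rw [sub_ne_zero]; exact_mod_cast ht.symm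
  rw [Complex.cpow_sub _ _ h2, Complex.cpow_one, sub_self, Complex.cpow_zero]
  ring

lemma PS_J_one {w : ℂ} (hw : ‖w‖ < 1) : w * PS (Jc 1 1) w = -Complex.log (1 - w) := by
  rw [← (Complex.hasSum_taylorSeries_neg_log' hw).tsum_eq]
  unfold PS
  rw [← tsum_mul_left]
  refine tsum_congr fun m => ?_
  rw [Jc_one]
  ring

lemma J_asymp {a b : ℂ} (ha : 0 < a.re) (hb : 0 < b.re) :
    Tendsto (fun w : ℝ => PS (Jc a b) w + Complex.log (1 - w) / w) (𝓝[<] 1)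
      (𝓝 (2 * digammaC 1 - digammaC a - digammaC b)) := by
  have h1 := (J_diff ha hb).add (J_diff (a := 1) (by simp) ha)
  rw [Jc_symm (a := 1) (b := a) (by simp) ha] at h1
  rw [show 2 * digammaC 1 - digammaC a - digammaC b =
    digammaC 1 - digammaC b + (digammaC 1 - digammaC a) by ring]
  refine h1.congr' ?_
  filter_upwards [Ioo_mem_nhdsLT one_pos] with w hw
  have hw0 : (w : ℂ) ≠ 0 := by exact_mod_cast hw.1.ne'
  have h := PS_J_one (w := w) (by
    rw [Complex.norm_real, Real.norm_of_nonneg hw.1.le]; exact hw.2)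
  have : Complex.log (1 - w) = -(w * PS (Jc 1 1) w) := by rw [h, neg_neg]
  rw [this]
  field_simp
  ring

/-- The lens where everything is analytic. -/
def lens : Set ℂ := Metric.ball 0 1 ∩ Metric.ball 1 1

lemma mem_lens {z : ℂ} : z ∈ lens ↔ ‖z‖ < 1 ∧ ‖1 - z‖ < 1 := by
  simp only [lens, Set.mem_inter_iff, Metric.mem_ball, dist_comm z 1, dist_eq_norm,
    sub_zero]

lemma lens_slit {z : ℂ} (hz : z ∈ lens) : z ∈ Complex.slitPlane := by
  have h := Complex.mem_slitPlane_of_norm_lt_one (z := -(1 - z)) (by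
    rw [norm_neg]; exact (mem_lens.1 hz).2)
  simpa using h

lemma one_sub_slit {z : ℂ} (hz : ‖z‖ < 1) : 1 - z ∈ Complex.slitPlane := by
  rw [sub_eq_add_neg]
  exact Complex.mem_slitPlane_of_norm_lt_one (by rwa [norm_neg])

lemma lens_real {t : ℝ} (h0 : 0 < t) (h1 : t < 1) : (t : ℂ) ∈ lens := by
  rw [mem_lens]
  have : (1 : ℂ) - t = ((1 - t : ℝ) : ℂ) := by push_cast; ring
  rw [this, Complex.norm_real, Complex.norm_real, Real.norm_of_nonneg h0.le,
    Real.norm_of_nonneg (by linarith)]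
  constructor <;> linarith

lemma ode_uniq (a b : ℂ) (u u1 u2 h h1 h2 : ℂ → ℂ)
    (du : ∀ z, ‖z‖ < 1 → HasDerivAt u (u1 z) z) (du1 : ∀ z, ‖z‖ < 1 → HasDerivAt u1 (u2 z) z)
    (dh : ∀ z ∈ lens, HasDerivAt h (h1 z) z) (dh1 : ∀ z ∈ lens, HasDerivAt h1 (h2 z) z)
    (ou : ∀ z ∈ lens, z * (1 - z) * u2 z + (1 - (a + b + 1) * z) * u1 z - a * b * u z = 0)
    (oh : ∀ z ∈ lens, z * (1 - z) * h2 z + (1 - (a + b + 1) * z) * h1 z - a * b * h z = 0)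
    (u0 : u 0 = 1) (hlim : Tendsto (fun t : ℝ => h t) (𝓝[>] 0) (𝓝 0)) :
    ∀ z ∈ lens, h z = 0 := by
  have hopen : IsOpen lens := Metric.isOpen_ball.inter Metric.isOpen_ball
  have hconv : Convex ℝ lens := (convex_ball _ _).inter (convex_ball _ _)
  -- the Wronskian is constant
  obtain ⟨c, hc⟩ : ∃ c, ∀ z ∈ lens, z * (1 - z) ^ (a + b) * (h1 z * u z - h z * u1 z) = c := by
    have hd : ∀ z ∈ lens,
        HasDerivAt (fun z => z * (1 - z) ^ (a + b) * (h1 z * u z - h z * u1 z)) 0 z := by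
      intro z hz
      have hz1 := (mem_lens.1 hz).1
      have hne : 1 - z ≠ 0 := Complex.slitPlane_ne_zero (one_sub_slit hz1)
      have d1 := (((hasDerivAt_id z).fun_mul (((hasDerivAt_id z).const_sub 1).cpow_const
        (c := a + b) (one_sub_slit hz1))).fun_mul
        (((dh1 z hz).fun_mul (du z hz1)).fun_sub ((dh z hz).fun_mul (du1 z hz1))))
      refine d1.congr_deriv ?_
      have e2 : (1 - z) ^ (a + b) = (1 - z) ^ (a + b - 1) * (1 - z) := by
        rw [Complex.cpow_sub _ _ hne, Complex.cpow_one]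
        field_simp
      simp only [id]
      rw [e2]
      linear_combination (1 - z) ^ (a + b - 1) * (u z * oh z hz - h z * ou z hz)
    exact hopen.exists_is_const_of_deriv_eq_zero hconv.isPreconnected
      (fun y hy => (hd y hy).differentiableAt.differentiableWithinAt) (fun y hy => (hd y hy).deriv)
  -- local analysis at zero
  have hu0 := du 0 (by simp)
  have hune : ∀ᶠ z in 𝓝 (0:ℂ), u z ≠ 0 :=
    hu0.continuousAt.eventually_ne (by rw [u0]; exact one_ne_zero)
  set q : ℂ → ℂ := fun z => (1 - z) ^ (-(a + b)) / u z ^ 2 with hq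
  have hq0 : q 0 = 1 := by simp [hq, u0]
  have hqd : DifferentiableAt ℂ q 0 := by
    refine DifferentiableAt.div ?_ (hu0.differentiableAt.pow 2) (by simp [u0])
    exact (((hasDerivAt_id (0:ℂ)).const_sub 1).cpow_const (c := -(a + b))
      (one_sub_slit (by simp))).differentiableAt
  obtain ⟨C, hC⟩ := hqd.isBigO_sub.bound
  obtain ⟨δ, hδ, hball⟩ := Metric.eventually_nhds_iff_ball.1 (hune.and hC)
  set V : Set ℂ := lens ∩ Metric.ball 0 δ with hV
  have hVconv : Convex ℝ V := hconv.inter (convex_ball _ _)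
  have hVopen : IsOpen V := hopen.inter Metric.isOpen_ball
  set k : ℂ → ℂ := fun z => h z / u z - c * Complex.log z with hk
  have hkd : ∀ z ∈ V, HasDerivAt k (c * (q z - 1) / z) z := by
    intro z hz
    have hz1 := (mem_lens.1 hz.1).1
    have hu := (hball z hz.2).1
    have hne : 1 - z ≠ 0 := Complex.slitPlane_ne_zero (one_sub_slit hz1)
    have hz0 : z ≠ 0 := Complex.slitPlane_ne_zero (lens_slit hz.1)
    have hp : (1 - z) ^ (a + b) ≠ 0 := fun hh => hne ((Complex.cpow_eq_zero_iff _ _).1 hh).1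
    refine (((dh z hz.1).fun_div (du z hz1) hu).fun_sub
      ((Complex.hasDerivAt_log (lens_slit hz.1)).const_mul c)).congr_deriv ?_
    rw [← hc z hz.1]
    simp only [hq]
    rw [Complex.cpow_neg]
    field_simp
  have hbound : ∀ z ∈ V, ‖c * (q z - 1) / z‖ ≤ ‖c‖ * C := by
    intro z hz
    have hz0 : z ≠ 0 := Complex.slitPlane_ne_zero (lens_slit hz.1)
    have := (hball z hz.2).2
    rw [hq0, sub_zero] at this
    rw [norm_div, norm_mul, div_le_iff₀ (norm_pos_iff.2 hz0), mul_assoc]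
    gcongr
  have hlip : ∀ x ∈ V, ∀ y ∈ V, ‖k y - k x‖ ≤ ‖c‖ * C * ‖y - x‖ := fun x hx y hy =>
    hVconv.norm_image_sub_le_of_norm_hasDerivWithin_le
      (fun z hz => (hkd z hz).hasDerivWithinAt) hbound hx hy
  have hVreal : ∀ᶠ t : ℝ in 𝓝[>] 0, (t : ℂ) ∈ V := by
    filter_upwards [Ioo_mem_nhdsGT (lt_min one_pos hδ)] with t ht
    refine ⟨lens_real ht.1 (ht.2.trans_le (min_le_left _ _)), ?_⟩
    rw [Metric.mem_ball, dist_zero_right, Complex.norm_real, Real.norm_of_nonneg ht.1.le]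
    exact ht.2.trans_le (min_le_right _ _)
  have hquot : Tendsto (fun t : ℝ => h t / u t) (𝓝[>] 0) (𝓝 0) := by
    have hut : Tendsto (fun t : ℝ => u t) (𝓝[>] 0) (𝓝 1) := by
      have h3 : ContinuousAt (fun t : ℝ => u t) 0 :=
        ContinuousAt.comp (f := fun t : ℝ => (t : ℂ)) (g := u)
          (by simpa using hu0.continuousAt) (by fun_prop)
      have h4 := h3.tendsto
      simp only [Complex.ofReal_zero, u0] at h4
      exact h4.mono_left nhdsWithin_le_nhds
    have h5 := hlim.div hut one_ne_zero
    rw [zero_div] at h5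
    exact h5
  obtain ⟨t0, ht0⟩ := hVreal.exists
  have hc0 : c = 0 := by
    by_contra hcne
    have hlog : Tendsto (fun t : ℝ => ‖c‖ * ‖Complex.log t‖) (𝓝[>] 0) atTop := by
      refine Tendsto.const_mul_atTop (norm_pos_iff.2 hcne) ?_
      refine (tendsto_abs_atBot_atTop.comp Real.tendsto_log_nhdsGT_zero).congr' ?_
      filter_upwards [self_mem_nhdsWithin] with t (ht : 0 < t)
      rw [← Complex.ofReal_log ht.le, Complex.norm_real]
      rfl
    have hsm : ∀ᶠ t : ℝ in 𝓝[>] 0, ‖h t / u t‖ < 1 := by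
      have := hquot.norm
      rw [norm_zero] at this
      exact this.eventually (gt_mem_nhds one_pos)
    obtain ⟨t, ⟨⟨ht1, ht2⟩, ht3⟩, ht4⟩ := (((hVreal.and hsm).and
      (hlog.eventually_gt_atTop (1 + ‖k t0‖ + ‖c‖ * C * 2))).and hVreal).exists
    have hCn : 0 ≤ ‖c‖ * C := (norm_nonneg _).trans (hbound _ ht0)
    have e1 : c * Complex.log t = h t / u t - k t0 - (k t - k t0) := by
      simp only [hk]; ring
    have e2 : ‖(t : ℂ) - t0‖ ≤ 2 := by
      have h5 := (mem_lens.1 ht1.1).1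
      have h6 := (mem_lens.1 ht0.1).1
      linarith [norm_sub_le (t : ℂ) t0]
    have e3 : ‖k t - k t0‖ ≤ ‖c‖ * C * 2 :=
      (hlip _ ht0 _ ht1).trans (mul_le_mul_of_nonneg_left e2 hCn)
    rw [← norm_mul, e1] at ht3
    linarith [norm_sub_le (h t / u t - k t0) (k t - k t0), norm_sub_le (h t / u t) (k t0)]
  have hk0 : ∀ x ∈ V, h x = 0 := by
    intro x hx
    have e1 : ∀ᶠ t : ℝ in 𝓝[>] 0, h x / u x = h t / u t := by
      filter_upwards [hVreal] with t ht
      have h5 := hlip x hx t ht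
      simp only [hc0, norm_zero, zero_mul, hk, sub_zero] at h5
      exact (sub_eq_zero.1 (norm_le_zero_iff.1 h5)).symm
    have e2 : h x / u x = 0 :=
      tendsto_nhds_unique (tendsto_const_nhds.congr' e1) hquot
    rcases div_eq_zero_iff.1 e2 with h6 | h6
    · exact h6
    · exact absurd h6 (hball x hx.2).1
  have han : AnalyticOnNhd ℂ h lens :=
    DifferentiableOn.analyticOnNhd
      (fun z hz => (dh z hz).differentiableAt.differentiableWithinAt) hopen
  refine han.eqOn_zero_of_preconnected_of_eventuallyEq_zero hconv.isPreconnected ht0.1 ?_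
  filter_upwards [hVopen.mem_nhds ht0] with z hz
  exact hk0 z hz

/-- Coefficients of `₂F₁(a, b; 1; z)`. -/
noncomputable def cu (a b : ℂ) (m : ℕ) : ℂ := po a m * po b m / ((m.factorial : ℂ) ^ 2)

/-- The digamma combination. -/
noncomputable def dm (a b : ℂ) (m : ℕ) : ℂ :=
  digammaC (a + m) + digammaC (b + m) - 2 * digammaC (1 + m)

lemma PG_cu (a b : ℂ) : PG (cu a b) :=
  ((PG_bin a).mul (PG_bin b)).congr fun m => by
    simp only [cu]
    rw [div_mul_div_comm, sq]

lemma PG_dm {a b : ℂ} (ha : 0 < a.re) (hb : 0 < b.re) : PG (dm a b) :=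
  ((PG_digamma ha).add (PG_digamma hb)).sub ((PG_digamma (c := 1) (by simp)).cmul 2)

lemma cu_rec (a b : ℂ) (m : ℕ) :
    ((m : ℂ) + 1) * (m + 1) * cu a b (m + 1) = (m + a) * (m + b) * cu a b m := by
  have h1 : ((m.factorial : ℕ) : ℂ) ≠ 0 := by exact_mod_cast m.factorial_ne_zero
  have h2 : (m : ℂ) + 1 ≠ 0 := by exact_mod_cast m.succ_ne_zero
  simp only [cu, po_succ, Nat.factorial_succ]
  push_cast
  field_simp
  ring

lemma dm_rec {a b : ℂ} (ha : 0 < a.re) (hb : 0 < b.re) (m : ℕ) :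
    dm a b (m + 1) = dm a b m + (1 / (a + m) + 1 / (b + m) - 2 / (1 + m)) := by
  simp only [dm]
  rw [digammaC_succ ha, digammaC_succ hb, digammaC_succ (c := 1) (by simp)]
  ring

lemma ode_u (a b : ℂ) {z : ℂ} (hz : ‖z‖ < 1) :
    z * (1 - z) * PS (DD (DD (cu a b))) z + (1 - (a + b + 1) * z) * PS (DD (cu a b)) z
      - a * b * PS (cu a b) z = 0 := by
  rw [PS_ode (PG_cu a b) a b 1 hz]
  simp [PS, cu_rec]

lemma ode_v {a b : ℂ} (ha : 0 < a.re) (hb : 0 < b.re) {z : ℂ} (hz : ‖z‖ < 1) :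
    z * (1 - z) * PS (DD (DD (fun m => cu a b m * dm a b m))) z
      + (1 - (a + b + 1) * z) * PS (DD (fun m => cu a b m * dm a b m)) z
      - a * b * PS (fun m => cu a b m * dm a b m) z
      = (a + b) * PS (cu a b) z - 2 * (1 - z) * PS (DD (cu a b)) z := by
  have hu := PG_cu a b
  rw [PS_ode (hu.mul (PG_dm ha hb)) a b 1 hz]
  have e1 : (a + b) * PS (cu a b) z - 2 * (1 - z) * PS (DD (cu a b)) z
      = ((a + b) * PS (cu a b) z + 2 * PS (fun m => m * cu a b m) z)
        - 2 * PS (DD (cu a b)) z := by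
    rw [← PS_mul_dd hu hz]
    ring
  rw [e1, ← PS_cmul, ← PS_cmul, ← PS_cmul, ← PS_add (hu.cmul _) ((PG.nat.mul hu).cmul _) hz,
    ← PS_sub ((hu.cmul _).add ((PG.nat.mul hu).cmul _)) (hu.dd.cmul _) hz]
  congr 1
  funext m
  have h2 : (m : ℂ) + 1 ≠ 0 := by exact_mod_cast m.succ_ne_zero
  have h3 : a + m ≠ 0 := ne_zero_of_re (re_add_nat ha m)
  have h4 : b + m ≠ 0 := ne_zero_of_re (re_add_nat hb m)
  have h5 := cu_rec a b m
  have h6 : cu a b (m + 1) = (m + a) * (m + b) * cu a b m / (((m : ℂ) + 1) * (m + 1)) := by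
    field_simp
    linear_combination h5
  simp only [DD]
  rw [dm_rec ha hb, h6, add_comm (1 : ℂ) m, add_comm (m : ℂ) a, add_comm (m : ℂ) b]
  field_simp
  ring

lemma Jc_rec {a b : ℂ} (ha : 0 < a.re) (hb : 0 < b.re) (m : ℕ) :
    ((m : ℂ) + 1) * (m + (a + b)) * Jc a b (m + 1) = (m + a) * (m + b) * Jc a b m := by
  have hab : 0 < (a + b).re := by simp; linarith
  have h1 : ((m.factorial : ℕ) : ℂ) ≠ 0 := by exact_mod_cast m.factorial_ne_zero
  have h2 : (m : ℂ) + 1 ≠ 0 := by exact_mod_cast m.succ_ne_zero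
  have h3 : a + b + m ≠ 0 := ne_zero_of_re (re_add_nat hab m)
  have h4 := po_ne_zero hab m
  have h5 : Complex.Gamma (a + b) ≠ 0 := Complex.Gamma_ne_zero_of_re_pos hab
  rw [Jc_eq ha hb, Jc_eq ha hb]
  simp only [po_succ, Nat.factorial_succ]
  push_cast
  field_simp
  ring

lemma ode_J {a b : ℂ} (ha : 0 < a.re) (hb : 0 < b.re) {z : ℂ} (hz : ‖z‖ < 1) :
    z * (1 - z) * PS (DD (DD (Jc a b))) z + (a + b - (a + b + 1) * z) * PS (DD (Jc a b)) z
      - a * b * PS (Jc a b) z = 0 := by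
  rw [PS_ode (PG_Jc ha hb) a b (a + b) hz]
  simp [PS, Jc_rec ha hb]

lemma h_lim {a b : ℂ} (ha : 0 < a.re) (hb : 0 < b.re) :
    Tendsto (fun t : ℝ => PS (Jc a b) (1 - (t : ℂ)) + Complex.log t * PS (cu a b) t
      + PS (fun m => cu a b m * dm a b m) t) (𝓝[>] 0) (𝓝 0) := by
  have hto : Tendsto (fun t : ℝ => (t : ℂ)) (𝓝[>] 0) (𝓝 0) := by
    have : Tendsto (fun t : ℝ => (t : ℂ)) (𝓝 0) (𝓝 ((0 : ℝ) : ℂ)) :=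
      Complex.continuous_ofReal.tendsto 0
    rw [Complex.ofReal_zero] at this
    exact this.mono_left nhdsWithin_le_nhds
  have hsub : Tendsto (fun t : ℝ => 1 - t) (𝓝[>] 0) (𝓝[<] 1) := by
    refine tendsto_nhdsWithin_iff.2 ⟨?_, ?_⟩
    · have : Tendsto (fun t : ℝ => 1 - t) (𝓝 0) (𝓝 (1 - 0)) :=
        (continuous_const.sub continuous_id).tendsto 0
      rw [sub_zero] at this
      exact this.mono_left nhdsWithin_le_nhds
    · filter_upwards [self_mem_nhdsWithin] with t (ht : 0 < t)
      simpa using ht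
  have h1 := (J_asymp ha hb).comp hsub
  have h2 : Tendsto (fun t : ℝ => PS (fun m => cu a b m * dm a b m) t) (𝓝[>] 0)
      (𝓝 (digammaC a + digammaC b - 2 * digammaC 1)) := by
    have hc := (PS_hasDerivAt ((PG_cu a b).mul (PG_dm ha hb)) (z := 0) (by simp)).continuousAt
    have h3 := hc.tendsto.comp hto
    rw [PS_zero] at h3
    simpa [cu, dm, po_zero, Function.comp_def] using h3
  have h4 : Tendsto (fun t : ℝ => Complex.log t * (PS (cu a b) t - (1 - (t : ℂ))⁻¹))
      (𝓝[>] 0) (𝓝 0) := by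
    have hd : DifferentiableAt ℂ (fun z => PS (cu a b) z - (1 - z)⁻¹) 0 := by
      refine (PS_hasDerivAt (PG_cu a b) (by simp)).differentiableAt.fun_sub ?_
      exact DifferentiableAt.fun_inv (by fun_prop) (by simp)
    have hO := hd.isBigO_sub.comp_tendsto hto
    have hl : Tendsto (fun t : ℝ => Complex.log t * t) (𝓝[>] 0) (𝓝 0) := by
      have h5 := (Complex.continuous_ofReal.tendsto 0).comp
        (tendsto_log_mul_rpow_nhdsGT_zero zero_lt_one)
      rw [Complex.ofReal_zero] at h5
      refine h5.congr' ?_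
      filter_upwards [self_mem_nhdsWithin] with t (ht : 0 < t)
      simp [Complex.ofReal_log ht.le]
    refine (Asymptotics.IsBigO.mul (Asymptotics.isBigO_refl (fun t : ℝ => Complex.log t) _)
      hO).trans_tendsto ?_ |>.congr' ?_
    · simpa [Function.comp_def] using hl
    · refine Eventually.of_forall fun t => ?_
      simp [PS_zero, cu, po_zero]
  have h5 := (h1.add h4).add h2
  have e0 : (2 * digammaC 1 - digammaC a - digammaC b + 0
      + (digammaC a + digammaC b - 2 * digammaC 1)) = 0 := by ring
  rw [e0] at h5
  refine h5.congr fun t => ?_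
  simp only [Function.comp_apply]
  push_cast
  rw [sub_sub_cancel]
  ring

lemma h_zero {a b : ℂ} (ha : 0 < a.re) (hb : 0 < b.re) :
    ∀ z ∈ lens, PS (Jc a b) (1 - z) + Complex.log z * PS (cu a b) z
      + PS (fun m => cu a b m * dm a b m) z = 0 := by
  have gu := PG_cu a b
  have gv := gu.mul (PG_dm ha hb)
  have gJ := PG_Jc ha hb
  set e : ℕ → ℂ := fun m => cu a b m * dm a b m with he
  refine ode_uniq a b (PS (cu a b)) (PS (DD (cu a b))) (PS (DD (DD (cu a b))))
    (fun z => PS (Jc a b) (1 - z) + Complex.log z * PS (cu a b) z + PS e z)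
    (fun z => -PS (DD (Jc a b)) (1 - z)
      + (z⁻¹ * PS (cu a b) z + Complex.log z * PS (DD (cu a b)) z) + PS (DD e) z)
    (fun z => PS (DD (DD (Jc a b))) (1 - z)
      + ((-(z ^ 2)⁻¹ * PS (cu a b) z + z⁻¹ * PS (DD (cu a b)) z)
        + (z⁻¹ * PS (DD (cu a b)) z + Complex.log z * PS (DD (DD (cu a b))) z))
      + PS (DD (DD e)) z)
    (fun z hz => PS_hasDerivAt gu hz) (fun z hz => PS_hasDerivAt gu.dd hz) ?_ ?_
    (fun z hz => ode_u a b (mem_lens.1 hz).1) ?_ (by simp [PS_zero, cu, po_zero]) (h_lim ha hb)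
  · intro z hz
    obtain ⟨hz1, hz2⟩ := mem_lens.1 hz
    have dJ := (PS_hasDerivAt gJ hz2).comp z ((hasDerivAt_id z).const_sub 1)
    refine ((dJ.fun_add ((Complex.hasDerivAt_log (lens_slit hz)).fun_mul
      (PS_hasDerivAt gu hz1))).fun_add (PS_hasDerivAt gv hz1)).congr_deriv ?_
    ring
  · intro z hz
    obtain ⟨hz1, hz2⟩ := mem_lens.1 hz
    have dJ := ((PS_hasDerivAt gJ.dd hz2).comp z ((hasDerivAt_id z).const_sub 1)).fun_neg
    have hz0 : z ≠ 0 := Complex.slitPlane_ne_zero (lens_slit hz)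
    refine ((dJ.fun_add (((hasDerivAt_inv hz0).fun_mul (PS_hasDerivAt gu hz1)).fun_add
      ((Complex.hasDerivAt_log (lens_slit hz)).fun_mul
      (PS_hasDerivAt gu.dd hz1)))).fun_add (PS_hasDerivAt gv.dd hz1)).congr_deriv ?_
    ring
  · intro z hz
    obtain ⟨hz1, hz2⟩ := mem_lens.1 hz
    have hz0 : z ≠ 0 := Complex.slitPlane_ne_zero (lens_slit hz)
    have o1 := ode_u a b hz1
    have o2 := ode_v ha hb hz1
    have o3 := ode_J ha hb hz2
    have hi : z * z⁻¹ = 1 := mul_inv_cancel₀ hz0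
    have hi2 : z * (z ^ 2)⁻¹ = z⁻¹ := by field_simp
    rw [← he] at o2
    linear_combination o3 + Complex.log z * o1 + o2
      - (1 - z) * PS (cu a b) z * hi2
      + (2 * (1 - z) * PS (DD (cu a b)) z - (a + b) * PS (cu a b) z) * hi

theorem stmt12 (α β : ℂ) (hα : 0 < α.re) (hβ : 0 < β.re) (w : ℝ)
    (hw0 : 0 < w) (hw1 : w < 1) :
    hyp2F1 α β (α + β) w =
      Complex.Gamma (α + β) / (Complex.Gamma α * Complex.Gamma β) *
        (-(Complex.log (1 - w)) * hyp2F1 α β 1 (1 - w)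
          - ∑' m : ℕ, (ascPochhammer ℂ m).eval α * (ascPochhammer ℂ m).eval β /
              ((Nat.factorial m : ℂ) ^ 2) *
              (digammaC (α + m) + digammaC (β + m) - 2 * digammaC (1 + m)) *
              (1 - (w : ℂ)) ^ m) := by
  have hab : 0 < (α + β).re := by simp; linarith
  have g1 : Complex.Gamma α ≠ 0 := Complex.Gamma_ne_zero_of_re_pos hα
  have g2 : Complex.Gamma β ≠ 0 := Complex.Gamma_ne_zero_of_re_pos hβ
  have g3 : Complex.Gamma (α + β) ≠ 0 := Complex.Gamma_ne_zero_of_re_pos hab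
  have hl : (1 - (w : ℂ)) ∈ lens := by
    have h := lens_real (t := 1 - w) (by linarith) (by linarith)
    push_cast at h
    exact h
  have hz := h_zero hα hβ _ hl
  rw [sub_sub_cancel] at hz
  have e1 : hyp2F1 α β 1 (1 - (w : ℂ)) = PS (cu α β) (1 - (w : ℂ)) := by
    unfold hyp2F1 PS
    refine tsum_congr fun m => ?_
    have h1 := po_one m
    simp only [po] at h1
    rw [h1, ← sq]
    rfl
  have e2 : (∑' m : ℕ, (ascPochhammer ℂ m).eval α * (ascPochhammer ℂ m).eval β /
              ((Nat.factorial m : ℂ) ^ 2) *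
              (digammaC (α + m) + digammaC (β + m) - 2 * digammaC (1 + m)) *
              (1 - (w : ℂ)) ^ m) = PS (fun m => cu α β m * dm α β m) (1 - (w : ℂ)) := rfl
  have e3 : PS (Jc α β) w = Complex.Gamma α * Complex.Gamma β / Complex.Gamma (α + β) *
      hyp2F1 α β (α + β) w := by
    unfold hyp2F1 PS
    rw [← tsum_mul_left]
    refine tsum_congr fun m => ?_
    rw [Jc_eq hα hβ, mul_assoc]
    rfl
  rw [e3] at hz
  rw [e1, e2]
  have h9 : -(Complex.log (1 - w)) * PS (cu α β) (1 - (w : ℂ))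
      - PS (fun m => cu α β m * dm α β m) (1 - (w : ℂ))
      = Complex.Gamma α * Complex.Gamma β / Complex.Gamma (α + β) *
      hyp2F1 α β (α + β) w := by
    linear_combination -hz
  rw [h9]
  field_simp
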